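/- Let b,d,w,x ∈ ℂ with x ≠ 0, and suppose the matrix S = [[(2bw+dx)/x, b, 0],[(b−bw²)/x², d, 0],[0,0,1]] is invertible. Set R = [[w,x,0],[(1−w²)/x,−w,0],[0,0,1]] and G₁ = G₂ = I₃. Then R is invertible and the four matrices satisfy the defining relations of TVB₂: R² = I₃, G₁² = I₃, G₂² = I₃, G₁G₂ = G₂G₁, RG₁ = G₂R, and RSR = G₂G₁SG₁G₂. (Hence the assignment σ₁ ↦ S, ρ₁ ↦ R, γ₁ ↦ G₁, γ₂ ↦ G₂ defines the representation ζ₂ of TVB₂ into GL₃(ℂ).) -/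

import Mathlib

/-!
Let `r` and `s` be the upper-left `2 × 2` blocks of `R` and `S`. Since `r` has trace `0` and
determinant `-1`, Cayley–Hamilton gives `r * r = 1`, and `s = (b / x) • r + (d + b * w / x) • 1`
commutes with `r`. Both facts survive `M ↦ M ⊕ 1`, and once `γ₁` and `γ₂` act trivially, the
relations of TVB₂ only ask that `ρ₁` be an involution commuting with `σ₁`.
-/

theorem mul_mul_eq_of_commute_of_mul_eq_one {M : Type*} [Monoid M] {a b c : M}
    (hac : Commute a c) (hab : a * b = 1) : a * c * b = c := by
  rw [hac.eq, mul_assoc, hab, mul_one]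

theorem mul_self_eq_trace_smul_sub_det_smul_one {A : Type*} [CommRing A]
    (M : Matrix (Fin 2) (Fin 2) A) : M * M = M.trace • M - M.det • 1 := by
  nontriviality A
  have cayley_hamilton : M * M - M.trace • M + M.det • 1 = 0 := by
    simpa only [M.charpoly_fin_two, map_add, map_sub, map_mul, Polynomial.aeval_X,
      Polynomial.aeval_C, sq, Algebra.algebraMap_eq_smul_one, smul_mul_assoc, one_mul]
      using M.aeval_self_charpoly
  rwa [sub_add, sub_eq_zero] at cayley_hamilton

/-- The stabilization `M ↦ M ⊕ 1` of square matrices, with the index type of the block matrix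
transported along `e`. -/
def stabilizationHom {m n k : Type*} (A : Type*) [NonAssocSemiring A]
    [Fintype m] [Fintype n] [Fintype k] [DecidableEq m] [DecidableEq n] [DecidableEq k]
    (e : m ⊕ n ≃ k) : Matrix m m A →* Matrix k k A where
  toFun M := Matrix.reindex e e (Matrix.fromBlocks M 0 0 1)
  map_one' := by simp
  map_mul' M N := by simp [Matrix.submatrix_mul_equiv, Matrix.fromBlocks_multiply]

theorem stabilizationHom_fin_two {A : Type*} [NonAssocSemiring A] (p q r s : A) :
    stabilizationHom A (finSumFinEquiv : Fin 2 ⊕ Fin 1 ≃ Fin 3) !![p, q; r, s] =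
      !![p, q, 0; r, s, 0; 0, 0, 1] := by
  ext i j
  fin_cases i <;> fin_cases j <;> rfl

section Blocks

variable {K : Type*} [Field K]

/-- The upper-left block of the image of `ρ₁` under `ζ₂`. -/
def rhoBlock (w x : K) : Matrix (Fin 2) (Fin 2) K :=
  !![w, x; (1 - w ^ 2) / x, -w]

/-- The upper-left block of the image of `σ₁` under `ζ₂`. -/
def sigmaBlock (b d w x : K) : Matrix (Fin 2) (Fin 2) K :=
  !![(2 * b * w + d * x) / x, b; (b - b * w ^ 2) / x ^ 2, d]

theorem trace_rhoBlock (w x : K) : (rhoBlock w x).trace = 0 := by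
  simp [rhoBlock, Matrix.trace_fin_two]

theorem det_rhoBlock (w : K) {x : K} (hx : x ≠ 0) : (rhoBlock w x).det = -1 := by
  rw [rhoBlock, Matrix.det_fin_two_of, mul_div_cancel₀ _ hx]
  ring

theorem rhoBlock_mul_self (w : K) {x : K} (hx : x ≠ 0) : rhoBlock w x * rhoBlock w x = 1 := by
  simp [mul_self_eq_trace_smul_sub_det_smul_one, trace_rhoBlock, det_rhoBlock w hx]

theorem sigmaBlock_eq_smul_rhoBlock_add_smul_one (b d w : K) {x : K} (hx : x ≠ 0) :
    sigmaBlock b d w x = (b / x) • rhoBlock w x + (d + b * w / x) • 1 := by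
  have h₀₀ : (2 * b * w + d * x) / x = b / x * w + (d + b * w / x) := by field_simp; ring
  have h₀₁ : b = b / x * x := (div_mul_cancel₀ b hx).symm
  have h₁₀ : (b - b * w ^ 2) / x ^ 2 = b / x * ((1 - w ^ 2) / x) := by ring
  have h₁₁ : d = -(b / x * w) + (d + b * w / x) := by ring
  ext i j
  fin_cases i <;> fin_cases j <;> simpa [sigmaBlock, rhoBlock]

theorem commute_rhoBlock_sigmaBlock (b d w : K) {x : K} (hx : x ≠ 0) :
    Commute (rhoBlock w x) (sigmaBlock b d w x) := by
  rw [sigmaBlock_eq_smul_rhoBlock_add_smul_one b d w hx]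
  exact ((Commute.refl _).smul_right _).add_right ((Commute.one_right _).smul_right _)

end Blocks

theorem stmt_3_general {K : Type*} [Field K] (b d w x : K) (hx : x ≠ 0)
    (S R G₁ G₂ : Matrix (Fin 3) (Fin 3) K)
    (hS : S = !![(2 * b * w + d * x) / x, b, 0;
                 (b - b * w ^ 2) / x ^ 2, d, 0; 0, 0, 1])
    (hR : R = !![w, x, 0; (1 - w ^ 2) / x, -w, 0; 0, 0, 1])
    (hG₁ : G₁ = 1) (hG₂ : G₂ = 1) :
    IsUnit R ∧
    R * R = 1 ∧ G₁ * G₁ = 1 ∧ G₂ * G₂ = 1 ∧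
    G₁ * G₂ = G₂ * G₁ ∧ R * G₁ = G₂ * R ∧
    R * S * R = G₂ * G₁ * S * G₁ * G₂ := by
  rw [← stabilizationHom_fin_two, ← rhoBlock] at hR
  rw [← stabilizationHom_fin_two, ← sigmaBlock] at hS
  have hRR : R * R = 1 := by rw [hR, ← map_mul, rhoBlock_mul_self w hx, map_one]
  have hRS : Commute R S := hR ▸ hS ▸ (commute_rhoBlock_sigmaBlock b d w hx).map _
  have hRSR : R * S * R = S := mul_mul_eq_of_commute_of_mul_eq_one hRS hRR
  subst hG₁ hG₂
  simp only [mul_one, one_mul, true_and]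
  exact ⟨.of_mul_eq_one R hRR, hRR, hRSR⟩

/-- The assignment defining the representation ζ₂ of TVB₂: the given matrices are
invertible and satisfy the defining relations of TVB₂. -/
theorem stmt_3 (b d w x : ℂ) (hx : x ≠ 0)
    (S R G₁ G₂ : Matrix (Fin 3) (Fin 3) ℂ)
    (hS : S = !![(2 * b * w + d * x) / x, b, 0;
                 (b - b * w ^ 2) / x ^ 2, d, 0; 0, 0, 1])
    (hSu : IsUnit S)
    (hR : R = !![w, x, 0; (1 - w ^ 2) / x, -w, 0; 0, 0, 1])
    (hG₁ : G₁ = 1) (hG₂ : G₂ = 1) :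
    IsUnit R ∧
    R * R = 1 ∧ G₁ * G₁ = 1 ∧ G₂ * G₂ = 1 ∧
    G₁ * G₂ = G₂ * G₁ ∧ R * G₁ = G₂ * R ∧
    R * S * R = G₂ * G₁ * S * G₁ * G₂ :=
  stmt_3_general b d w x hx S R G₁ G₂ hS hR hG₁ hG₂
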